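/- Let T be a set of permutation patterns, each of length at least 3, with |T| ≤ 3. Suppose that for all r, s ≥ 1 the pair {id_r, ψ_s} is not contained in T, that T ≠ {132, 213, 321}, and that T ≠ {123, 231, 312}. Then ⟨S_n(T)⟩ = S_n for every n. -/

import Mathlib

/-- A permutation `π ∈ S_n` contains the pattern `τ ∈ S_k` if there is a strictly
increasing `f : Fin k → Fin n` such that `τ a < τ b ↔ π (f a) < π (f b)`. -/
def PermContains {k n : ℕ} (τ : Equiv.Perm (Fin k)) (π : Equiv.Perm (Fin n)) : Prop :=
  ∃ f : Fin k → Fin n, StrictMono f ∧ ∀ a b : Fin k, τ a < τ b ↔ π (f a) < π (f b)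

/-- `avoidSet n T` is `S_n(T)`: the permutations of `Fin n` avoiding every pattern in `T`,
where `T` is a set of permutations of arbitrary lengths. -/
def avoidSet (n : ℕ) (T : Set (Σ k : ℕ, Equiv.Perm (Fin k))) : Set (Equiv.Perm (Fin n)) :=
  {π | ∀ τ ∈ T, ¬ PermContains τ.2 π}
def p123 : Equiv.Perm (Fin 3) := 1
def p132 : Equiv.Perm (Fin 3) := Equiv.swap 1 2
def p213 : Equiv.Perm (Fin 3) := Equiv.swap 0 1
def p231 : Equiv.Perm (Fin 3) := finRotate 3
def p312 : Equiv.Perm (Fin 3) := (finRotate 3)⁻¹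
def p321 : Equiv.Perm (Fin 3) := Equiv.swap 0 2

namespace PermContains

variable {k l n : ℕ} {τ : Equiv.Perm (Fin k)} {π : Equiv.Perm (Fin n)}

theorem iff_strictMono :
    PermContains τ π ↔ ∃ f : Fin k → Fin n,
      StrictMono f ∧ StrictMono (fun a => π (f (τ.symm a))) := by
  constructor
  · rintro ⟨f, hf, h⟩
    exact ⟨f, hf, fun a b hab => (h _ _).1 (by simpa using hab)⟩
  · rintro ⟨f, hf, h⟩
    refine ⟨f, hf, fun a b => ?_⟩
    simpa using (h.lt_iff_lt (a := τ a) (b := τ b)).symm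

theorem trans {σ : Equiv.Perm (Fin l)} (h₁ : PermContains τ σ) (h₂ : PermContains σ π) :
    PermContains τ π := by
  obtain ⟨f, hf, hf'⟩ := h₁
  obtain ⟨g, hg, hg'⟩ := h₂
  exact ⟨g ∘ f, hg.comp hf, fun a b => (hf' a b).trans (hg' _ _)⟩

theorem inv (h : PermContains τ π) : PermContains τ⁻¹ π⁻¹ := by
  obtain ⟨f, hf, h⟩ := iff_strictMono.1 h
  exact iff_strictMono.2 ⟨_, h, fun a b hab => by simpa [Equiv.Perm.inv_def] using hf hab⟩

theorem rev_conj (h : PermContains τ π) :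
    PermContains (Fin.revPerm * τ * Fin.revPerm) (Fin.revPerm * π * Fin.revPerm) := by
  obtain ⟨f, hf, h⟩ := h
  refine ⟨fun a => (f a.rev).rev, fun a b hab => Fin.rev_lt_rev.2 (hf (Fin.rev_lt_rev.2 hab)),
    fun a b => ?_⟩
  simpa [Fin.rev_lt_rev] using h b.rev a.rev

theorem three_iff {τ : Equiv.Perm (Fin 3)} : PermContains τ π ↔
    ∃ i j k : Fin n, i < j ∧ j < k ∧
      π (![i, j, k] (τ.symm 0)) < π (![i, j, k] (τ.symm 1)) ∧
      π (![i, j, k] (τ.symm 1)) < π (![i, j, k] (τ.symm 2)) := by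
  simp only [iff_strictMono, Fin.strictMono_iff_lt_succ, Fin.forall_fin_two]
  constructor
  · rintro ⟨f, ⟨h₁, h₂⟩, h₃, h₄⟩
    have : f = ![f 0, f 1, f 2] := by ext i; fin_cases i <;> rfl
    rw [this] at h₃ h₄
    exact ⟨f 0, f 1, f 2, h₁, h₂, h₃, h₄⟩
  · rintro ⟨i, j, k, h₁, h₂, h₃, h₄⟩
    exact ⟨![i, j, k], ⟨h₁, h₂⟩, h₃, h₄⟩

theorem four_iff {τ : Equiv.Perm (Fin 4)} : PermContains τ π ↔
    ∃ i j k l : Fin n, i < j ∧ j < k ∧ k < l ∧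
      π (![i, j, k, l] (τ.symm 0)) < π (![i, j, k, l] (τ.symm 1)) ∧
      π (![i, j, k, l] (τ.symm 1)) < π (![i, j, k, l] (τ.symm 2)) ∧
      π (![i, j, k, l] (τ.symm 2)) < π (![i, j, k, l] (τ.symm 3)) := by
  simp only [iff_strictMono, Fin.strictMono_iff_lt_succ, Fin.forall_fin_succ, IsEmpty.forall_iff,
    and_true]
  constructor
  · rintro ⟨f, ⟨h₁, h₂, h₃⟩, h₄, h₅, h₆⟩
    have : f = ![f 0, f 1, f 2, f 3] := by ext i; fin_cases i <;> rfl
    rw [this] at h₄ h₅ h₆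
    exact ⟨f 0, f 1, f 2, f 3, h₁, h₂, h₃, h₄, h₅, h₆⟩
  · rintro ⟨i, j, k, l, h₁, h₂, h₃, h₄, h₅, h₆⟩
    exact ⟨![i, j, k, l], ⟨h₁, h₂, h₃⟩, h₄, h₅, h₆⟩

end PermContains

def p1234 : Equiv.Perm (Fin 4) := 1
def p4321 : Equiv.Perm (Fin 4) := Fin.revPerm
def p1243 : Equiv.Perm (Fin 4) := Equiv.swap 2 3
def p2134 : Equiv.Perm (Fin 4) := Equiv.swap 0 1
def p3421 : Equiv.Perm (Fin 4) := ⟨![2, 3, 1, 0], ![3, 2, 0, 1], by decide, by decide⟩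
def p4312 : Equiv.Perm (Fin 4) := p3421⁻¹

theorem rev_conj_p123 : Fin.revPerm * p123 * Fin.revPerm = p123 := by decide

theorem rev_conj_p321 : Fin.revPerm * p321 * Fin.revPerm = p321 := by decide

theorem rev_conj_p132 : Fin.revPerm * p132 * Fin.revPerm = p213 := by decide

theorem rev_conj_p213 : Fin.revPerm * p213 * Fin.revPerm = p132 := by decide

theorem rev_conj_p231 : Fin.revPerm * p231 * Fin.revPerm = p312 := by decide

theorem rev_conj_p312 : Fin.revPerm * p312 * Fin.revPerm = p231 := by decide

theorem rev_conj_p2134 : Fin.revPerm * p2134 * Fin.revPerm = p1243 := by decide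

theorem rev_conj_p1243 : Fin.revPerm * p1243 * Fin.revPerm = p2134 := by decide

section PatternIff

variable {n : ℕ} {π : Equiv.Perm (Fin n)}

theorem permContains_p123 : PermContains p123 π ↔
    ∃ i j k, i < j ∧ j < k ∧ π i < π j ∧ π j < π k := PermContains.three_iff

theorem permContains_p132 : PermContains p132 π ↔
    ∃ i j k, i < j ∧ j < k ∧ π i < π k ∧ π k < π j := PermContains.three_iff

theorem permContains_p213 : PermContains p213 π ↔
    ∃ i j k, i < j ∧ j < k ∧ π j < π i ∧ π i < π k := PermContains.three_iff

theorem permContains_p231 : PermContains p231 π ↔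
    ∃ i j k, i < j ∧ j < k ∧ π k < π i ∧ π i < π j := PermContains.three_iff

theorem permContains_p312 : PermContains p312 π ↔
    ∃ i j k, i < j ∧ j < k ∧ π j < π k ∧ π k < π i := PermContains.three_iff

theorem permContains_p321 : PermContains p321 π ↔
    ∃ i j k, i < j ∧ j < k ∧ π k < π j ∧ π j < π i := PermContains.three_iff

theorem permContains_p1234 : PermContains p1234 π ↔ ∃ i j k l, i < j ∧ j < k ∧ k < l ∧
    π i < π j ∧ π j < π k ∧ π k < π l := PermContains.four_iff

theorem permContains_p4321 : PermContains p4321 π ↔ ∃ i j k l, i < j ∧ j < k ∧ k < l ∧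
    π l < π k ∧ π k < π j ∧ π j < π i := PermContains.four_iff

theorem permContains_p1243 : PermContains p1243 π ↔ ∃ i j k l, i < j ∧ j < k ∧ k < l ∧
    π i < π j ∧ π j < π l ∧ π l < π k := PermContains.four_iff

theorem permContains_p3421 : PermContains p3421 π ↔ ∃ i j k l, i < j ∧ j < k ∧ k < l ∧
    π l < π k ∧ π k < π i ∧ π i < π j := PermContains.four_iff

end PatternIff

/-- The permutations avoiding `T` generate the symmetric group on `n` letters, for every `n`. -/
def AvoidersGenerate (T : Set (Σ k : ℕ, Equiv.Perm (Fin k))) : Prop :=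
  ∀ n, Subgroup.closure (avoidSet n T) = ⊤

namespace AvoidersGenerate

variable {S T : Set (Σ k : ℕ, Equiv.Perm (Fin k))}

theorem mono (hS : AvoidersGenerate S) (h : ∀ x ∈ T, ∃ y ∈ S, PermContains y.2 x.2) :
    AvoidersGenerate T := by
  intro n
  refine top_unique ((hS n).ge.trans (Subgroup.closure_mono fun π hπ x hx hc => ?_))
  obtain ⟨y, hy, hyx⟩ := h x hx
  exact hπ y hy (hyx.trans hc)

theorem of_inv (hS : AvoidersGenerate S) (h : ∀ x ∈ T, ⟨x.1, x.2⁻¹⟩ ∈ S) :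
    AvoidersGenerate T := by
  intro n
  refine top_unique ((hS n).ge.trans ((Subgroup.closure_le _).2 fun π hπ => ?_))
  rw [SetLike.mem_coe, ← inv_mem_iff]
  refine Subgroup.subset_closure fun x hx hc => hπ _ (h x hx) ?_
  simpa using hc.inv

theorem of_rev_conj (hS : AvoidersGenerate S)
    (h : ∀ x ∈ T, ⟨x.1, Fin.revPerm * x.2 * Fin.revPerm⟩ ∈ S) : AvoidersGenerate T := by
  intro n
  have hrev : (Fin.revPerm : Equiv.Perm (Fin n))⁻¹ = Fin.revPerm := rfl
  have hmap := congrArg (Subgroup.map (MulAut.conj (Fin.revPerm : Equiv.Perm (Fin n))).toMonoidHom)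
    (hS n)
  rw [MonoidHom.map_closure, Subgroup.map_top_of_surjective _ (MulEquiv.surjective _)] at hmap
  refine top_unique (hmap.ge.trans (Subgroup.closure_mono ?_))
  rintro _ ⟨π, hπ, rfl⟩ x hx hc
  refine hπ _ (h x hx) ?_
  have := hc.rev_conj
  rw [show Fin.revPerm * (MulAut.conj (Fin.revPerm : Equiv.Perm (Fin n))).toMonoidHom π *
    Fin.revPerm = π by ext; simp [hrev]] at this
  exact this

end AvoidersGenerate

/-- The function `g`, restricted to `{0, …, n - 1}`, is a permutation that avoids `T`. -/
def IsAvoidingWord (T : Set (Σ k : ℕ, Equiv.Perm (Fin k))) (n : ℕ) (g : ℕ → ℕ) : Prop :=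
  ∃ π ∈ avoidSet n T, ∀ i : Fin n, (π i : ℕ) = g i

theorem IsAvoidingWord.intro {T : Set (Σ k : ℕ, Equiv.Perm (Fin k))} {n : ℕ} {g : ℕ → ℕ}
    (hlt : ∀ i < n, g i < n) (hinj : ∀ i < n, ∀ j < n, g i = g j → i = j)
    (hT : ∀ π : Equiv.Perm (Fin n), (∀ i : Fin n, (π i : ℕ) = g i) → π ∈ avoidSet n T) :
    IsAvoidingWord T n g := by
  have hf : Function.Injective fun i : Fin n => (⟨g i, hlt i i.2⟩ : Fin n) := fun i j hij =>
    Fin.ext (hinj i i.2 j j.2 (congrArg Fin.val hij))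
  exact ⟨Equiv.ofBijective _ (Finite.injective_iff_bijective.1 hf), hT _ fun _ => rfl, fun _ => rfl⟩

theorem AvoidersGenerate.of_words {T : Set (Σ k : ℕ, Equiv.Perm (Fin k))} (a b c d : ℕ → ℕ → ℕ)
    (ha : ∀ m, IsAvoidingWord T (m + 2) (a m)) (hb : ∀ m, IsAvoidingWord T (m + 2) (b m))
    (hc : ∀ m, IsAvoidingWord T (m + 2) (c m)) (hd : ∀ m, IsAvoidingWord T (m + 2) (d m))
    (hab : ∀ m, (∀ i < m + 2, b m i = if a m i = 0 then 1 else if a m i = 1 then 0 else a m i) ∨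
      ∀ i < m + 2, b m i = a m (if i = 0 then 1 else if i = 1 then 0 else i))
    (hcd : ∀ m, ∀ i < m + 2, d m i = c m (if i = m + 1 then 0 else i + 1)) :
    AvoidersGenerate T := by
  rintro (_ | _ | m)
  · exact Subsingleton.elim _ _
  · exact Subsingleton.elim (α := Subgroup (Equiv.Perm (Fin 1))) _ _
  obtain ⟨α, hα, ha⟩ := ha m
  obtain ⟨β, hβ, hb⟩ := hb m
  obtain ⟨γ, hγ, hc⟩ := hc m
  obtain ⟨δ, hδ, hd⟩ := hd m
  have hval (i : Fin (m + 2)) : ((Equiv.swap 0 1 i : Fin (m + 2)) : ℕ) =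
      (if (i : ℕ) = 0 then 1 else if (i : ℕ) = 1 then 0 else (i : ℕ) : ℕ) := by
    simp only [Equiv.swap_apply_def, Fin.ext_iff, Fin.val_zero, Fin.val_one]
    split_ifs <;> rfl
  have hswap : Equiv.swap 0 1 ∈ Subgroup.closure (avoidSet (m + 2) T) := by
    rcases hab m with hab | hab
    · have : Equiv.swap 0 1 = β * α⁻¹ := by
        rw [eq_mul_inv_iff_mul_eq]
        ext i
        rw [Equiv.Perm.mul_apply, hval, ha, hb, hab i i.2]
      rw [this]
      exact mul_mem (Subgroup.subset_closure hβ) (inv_mem (Subgroup.subset_closure hα))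
    · have : Equiv.swap 0 1 = α⁻¹ * β := by
        rw [eq_inv_mul_iff_mul_eq]
        ext i
        rw [Equiv.Perm.mul_apply, ha, hb, hab i i.2, hval]
      rw [this]
      exact mul_mem (inv_mem (Subgroup.subset_closure hα)) (Subgroup.subset_closure hβ)
  have hrot : finRotate (m + 2) ∈ Subgroup.closure (avoidSet (m + 2) T) := by
    have : finRotate (m + 2) = γ⁻¹ * δ := by
      rw [eq_inv_mul_iff_mul_eq]
      ext i
      rw [Equiv.Perm.mul_apply, hc, hd, hcd m i i.2, coe_finRotate]
      simp [Fin.ext_iff]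
    rw [this]
    exact mul_mem (inv_mem (Subgroup.subset_closure hγ)) (Subgroup.subset_closure hδ)
  rw [eq_top_iff, ← Equiv.Perm.closure_cycle_adjacent_swap isCycle_finRotate
    support_finRotate 0, Subgroup.closure_le]
  rintro _ (rfl | rfl)
  · exact hrot
  · simpa using hswap

theorem AvoidersGenerate.of_adjacent_swaps {T : Set (Σ k : ℕ, Equiv.Perm (Fin k))}
    (a : ℕ → ℕ → ℕ) (b : ℕ → ℕ → ℕ → ℕ) (ha : ∀ m, IsAvoidingWord T (m + 1) (a m))
    (hb : ∀ m, ∀ k < m, IsAvoidingWord T (m + 1) (b m k))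
    (hab : ∀ m, ∀ k < m, ∀ i < m + 1,
      b m k i = a m (if i = k then k + 1 else if i = k + 1 then k else i)) :
    AvoidersGenerate T := by
  rintro (_ | m)
  · exact Subsingleton.elim _ _
  obtain ⟨α, hα, ha⟩ := ha m
  rw [← Subgroup.toSubmonoid_inj, Subgroup.top_toSubmonoid, eq_top_iff,
    ← Equiv.Perm.mclosure_swap_castSucc_succ, Submonoid.closure_le]
  rintro _ ⟨k, rfl⟩
  obtain ⟨β, hβ, hb⟩ := hb m k k.2
  have : Equiv.swap k.castSucc k.succ = α⁻¹ * β := by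
    rw [eq_inv_mul_iff_mul_eq]
    ext i
    rw [Equiv.Perm.mul_apply, ha, hb, hab m k k.2 i i.2]
    congr 1
    simp only [Equiv.swap_apply_def, Fin.ext_iff, Fin.val_castSucc, Fin.val_succ]
    split_ifs <;> rfl
  change Equiv.swap k.castSucc k.succ ∈ Subgroup.closure _
  rw [this]
  exact mul_mem (inv_mem (Subgroup.subset_closure hα)) (Subgroup.subset_closure hβ)

theorem mem_avoidSet_triple {n : ℕ} {π : Equiv.Perm (Fin n)}
    {x y z : Σ k : ℕ, Equiv.Perm (Fin k)} :
    π ∈ avoidSet n {x, y, z} ↔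
      ¬ PermContains x.2 π ∧ ¬ PermContains y.2 π ∧ ¬ PermContains z.2 π := by
  simp [avoidSet]

theorem avoidersGenerate_132_213_231 :
    AvoidersGenerate {⟨3, p132⟩, ⟨3, p213⟩, ⟨3, p231⟩} := by
  refine .of_words (fun m i => m + 1 - i)
    (fun m i => if i = m then 0 else if i = m + 1 then 1 else m + 1 - i)
    (fun m i => if i = 0 then m + 1 else i - 1)
    (fun m i => i)
    ?_ ?_ ?_ ?_ ?_ ?_
  iterate 4
    · refine fun m => .intro (by grind) (by grind) fun π h => ?_
      simp only [mem_avoidSet_triple, permContains_p132, permContains_p213, permContains_p231,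
        Fin.lt_def, h]
      grind
  · exact fun m => .inl (by grind)
  · grind

theorem avoidersGenerate_132_231_312 :
    AvoidersGenerate {⟨3, p132⟩, ⟨3, p231⟩, ⟨3, p312⟩} := by
  refine .of_words (fun m i => i)
    (fun m i => if i = 0 then 1 else if i = 1 then 0 else i)
    (fun m i => m + 1 - i)
    (fun m i => if i = m + 1 then m + 1 else m - i)
    ?_ ?_ ?_ ?_ ?_ ?_
  iterate 4
    · refine fun m => .intro (by grind) (by grind) fun π h => ?_
      simp only [mem_avoidSet_triple, permContains_p132, permContains_p231, permContains_p312,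
        Fin.lt_def, h]
      grind
  · exact fun m => .inl (by grind)
  · grind

theorem avoidersGenerate_123_132_231 :
    AvoidersGenerate {⟨3, p123⟩, ⟨3, p132⟩, ⟨3, p231⟩} := by
  refine .of_words (fun m i => m + 1 - i)
    (fun m i => if i = m then 0 else if i = m + 1 then 1 else m + 1 - i)
    (fun m i => m + 1 - i)
    (fun m i => if i = m + 1 then m + 1 else m - i)
    ?_ ?_ ?_ ?_ ?_ ?_
  iterate 4
    · refine fun m => .intro (by grind) (by grind) fun π h => ?_
      simp only [mem_avoidSet_triple, permContains_p123, permContains_p132, permContains_p231,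
        Fin.lt_def, h]
      grind
  · exact fun m => .inl (by grind)
  · grind

theorem avoidersGenerate_1234_231_312 :
    AvoidersGenerate {⟨4, p1234⟩, ⟨3, p231⟩, ⟨3, p312⟩} := by
  refine .of_words (fun m i => if i < 2 then i else m + 3 - i)
    (fun m i => if i = 0 then 1 else if i = 1 then 0 else m + 3 - i)
    (fun m i => if i = 0 then 0 else m + 2 - i)
    (fun m i => m + 1 - i)
    ?_ ?_ ?_ ?_ ?_ ?_
  iterate 4
    · refine fun m => .intro (by grind) (by grind) fun π h => ?_
      simp only [mem_avoidSet_triple, permContains_p1234, permContains_p231, permContains_p312,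
        Fin.lt_def, h]
      grind
  · exact fun m => .inl (by grind)
  · grind

theorem avoidersGenerate_123_3421_312 :
    AvoidersGenerate {⟨3, p123⟩, ⟨4, p3421⟩, ⟨3, p312⟩} := by
  refine .of_words (fun m i => if i = 0 then 0 else m + 2 - i)
    (fun m i => if i = 0 then 1 else if i = m + 1 then 0 else m + 2 - i)
    (fun m i => if i = 0 then 0 else m + 2 - i)
    (fun m i => m + 1 - i)
    ?_ ?_ ?_ ?_ ?_ ?_
  iterate 4
    · refine fun m => .intro (by grind) (by grind) fun π h => ?_
      simp only [mem_avoidSet_triple, permContains_p123, permContains_p3421, permContains_p312,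
        Fin.lt_def, h]
      grind
  · exact fun m => .inl (by grind)
  · grind

theorem avoidersGenerate_321_231_132 :
    AvoidersGenerate {⟨3, p321⟩, ⟨3, p231⟩, ⟨3, p132⟩} := by
  refine .of_words (fun m i => i)
    (fun m i => if i = 0 then 1 else if i = 1 then 0 else i)
    (fun m i => if i = 0 then m + 1 else i - 1)
    (fun m i => i)
    ?_ ?_ ?_ ?_ ?_ ?_
  iterate 4
    · refine fun m => .intro (by grind) (by grind) fun π h => ?_
      simp only [mem_avoidSet_triple, permContains_p321, permContains_p231, permContains_p132,
        Fin.lt_def, h]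
      grind
  · exact fun m => .inl (by grind)
  · grind

theorem avoidersGenerate_4321_132_213 :
    AvoidersGenerate {⟨4, p4321⟩, ⟨3, p132⟩, ⟨3, p213⟩} := by
  refine .of_words (fun m i => if i = 0 then m + 1 else if i = 1 then m else i - 2)
    (fun m i => if i = 0 then m else if i = 1 then m + 1 else i - 2)
    (fun m i => if i = 0 then m + 1 else i - 1)
    (fun m i => i)
    ?_ ?_ ?_ ?_ ?_ ?_
  iterate 4
    · refine fun m => .intro (by grind) (by grind) fun π h => ?_
      simp only [mem_avoidSet_triple, permContains_p4321, permContains_p132, permContains_p213,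
        Fin.lt_def, h]
      grind
  · exact fun m => .inr (by grind)
  · grind

theorem avoidersGenerate_321_1243_213 :
    AvoidersGenerate {⟨3, p321⟩, ⟨4, p1243⟩, ⟨3, p213⟩} := by
  refine .of_words (fun m i => if i = 0 then 0 else if i = 1 then m + 1 else i - 1)
    (fun m i => if i = 0 then m + 1 else i - 1)
    (fun m i => if i = 0 then m + 1 else i - 1)
    (fun m i => i)
    ?_ ?_ ?_ ?_ ?_ ?_
  iterate 4
    · refine fun m => .intro (by grind) (by grind) fun π h => ?_
      simp only [mem_avoidSet_triple, permContains_p321, permContains_p1243, permContains_p213,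
        Fin.lt_def, h]
      grind
  · exact fun m => .inr (by grind)
  · grind

theorem avoidersGenerate_123_132_213 :
    AvoidersGenerate {⟨3, p123⟩, ⟨3, p132⟩, ⟨3, p213⟩} :=
  .of_adjacent_swaps (fun m i => m - i)
    (fun m k i => if i = k then m - (k + 1) else if i = k + 1 then m - k else m - i)
    (fun m => .intro (by grind) (by grind) fun π h => by
      simp only [mem_avoidSet_triple, permContains_p123, permContains_p132, permContains_p213,
        Fin.lt_def, h]
      grind)
    (fun m k hk => .intro (by grind) (by grind) fun π h => by
      simp only [mem_avoidSet_triple, permContains_p123, permContains_p132, permContains_p213,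
        Fin.lt_def, h]
      grind)
    (by grind)

theorem avoidersGenerate_321_231_312 :
    AvoidersGenerate {⟨3, p321⟩, ⟨3, p231⟩, ⟨3, p312⟩} :=
  .of_adjacent_swaps (fun m i => i)
    (fun m k i => if i = k then k + 1 else if i = k + 1 then k else i)
    (fun m => .intro (by grind) (by grind) fun π h => by
      simp only [mem_avoidSet_triple, permContains_p321, permContains_p231, permContains_p312,
        Fin.lt_def, h]
      grind)
    (fun m k hk => .intro (by grind) (by grind) fun π h => by
      simp only [mem_avoidSet_triple, permContains_p321, permContains_p231, permContains_p312,
        Fin.lt_def, h]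
      grind)
    (by grind)

theorem avoidersGenerate_132_213_312 :
    AvoidersGenerate {⟨3, p132⟩, ⟨3, p213⟩, ⟨3, p312⟩} :=
  avoidersGenerate_132_213_231.of_inv (by
    simp only [Set.mem_insert_iff, Set.mem_singleton_iff, forall_eq_or_imp, forall_eq]
    decide)

theorem avoidersGenerate_123_132_312 :
    AvoidersGenerate {⟨3, p123⟩, ⟨3, p132⟩, ⟨3, p312⟩} :=
  avoidersGenerate_123_132_231.of_inv (by
    simp only [Set.mem_insert_iff, Set.mem_singleton_iff, forall_eq_or_imp, forall_eq]
    decide)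

theorem avoidersGenerate_321_312_132 :
    AvoidersGenerate {⟨3, p321⟩, ⟨3, p312⟩, ⟨3, p132⟩} :=
  avoidersGenerate_321_231_132.of_inv (by
    simp only [Set.mem_insert_iff, Set.mem_singleton_iff, forall_eq_or_imp, forall_eq]
    decide)

theorem avoidersGenerate_123_231_4312 :
    AvoidersGenerate {⟨3, p123⟩, ⟨3, p231⟩, ⟨4, p4312⟩} :=
  avoidersGenerate_123_3421_312.of_inv (by
    simp only [Set.mem_insert_iff, Set.mem_singleton_iff, forall_eq_or_imp, forall_eq]
    decide)

theorem avoidersGenerate_213_231_312 :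
    AvoidersGenerate {⟨3, p213⟩, ⟨3, p231⟩, ⟨3, p312⟩} :=
  avoidersGenerate_132_231_312.of_rev_conj (by simp [rev_conj_p213, rev_conj_p231, rev_conj_p312])

theorem avoidersGenerate_123_213_312 :
    AvoidersGenerate {⟨3, p123⟩, ⟨3, p213⟩, ⟨3, p312⟩} :=
  avoidersGenerate_123_132_231.of_rev_conj (by simp [rev_conj_p123, rev_conj_p213, rev_conj_p312])

theorem avoidersGenerate_321_312_213 :
    AvoidersGenerate {⟨3, p321⟩, ⟨3, p312⟩, ⟨3, p213⟩} :=
  avoidersGenerate_321_231_132.of_rev_conj (by simp [rev_conj_p321, rev_conj_p312, rev_conj_p213])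

theorem avoidersGenerate_123_213_231 :
    AvoidersGenerate {⟨3, p123⟩, ⟨3, p213⟩, ⟨3, p231⟩} :=
  avoidersGenerate_123_213_312.of_inv (by
    simp only [Set.mem_insert_iff, Set.mem_singleton_iff, forall_eq_or_imp, forall_eq]
    decide)

theorem avoidersGenerate_321_231_213 :
    AvoidersGenerate {⟨3, p321⟩, ⟨3, p231⟩, ⟨3, p213⟩} :=
  avoidersGenerate_321_312_213.of_inv (by
    simp only [Set.mem_insert_iff, Set.mem_singleton_iff, forall_eq_or_imp, forall_eq]
    decide)

theorem avoidersGenerate_321_132_2134 :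
    AvoidersGenerate {⟨3, p321⟩, ⟨3, p132⟩, ⟨4, p2134⟩} :=
  avoidersGenerate_321_1243_213.of_rev_conj (by simp [rev_conj_p321, rev_conj_p132, rev_conj_p2134])

section Structure

variable {k n : ℕ}

theorem PermContains.one_of_le (h : k ≤ n) :
    PermContains (1 : Equiv.Perm (Fin k)) (1 : Equiv.Perm (Fin n)) :=
  ⟨Fin.castLE h, Fin.strictMono_castLE h, fun _ _ => by simp⟩

theorem PermContains.rev_of_le (h : k ≤ n) :
    PermContains (Fin.revPerm : Equiv.Perm (Fin k)) (Fin.revPerm : Equiv.Perm (Fin n)) :=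
  ⟨Fin.castLE h, Fin.strictMono_castLE h, fun _ _ => by simp⟩

theorem PermContains.eq {τ π : Equiv.Perm (Fin n)} (h : PermContains τ π) : τ = π := by
  obtain ⟨f, hf, h⟩ := h
  have hf : f = id := hf.eq_id
  subst hf
  have hmono : StrictMono (π * τ⁻¹) := fun a b hab => (h _ _).1 (by simpa using hab)
  have := hmono.eq_id
  ext i
  simpa [eq_comm] using congrArg Fin.val (congrFun this (τ i))

theorem Equiv.Perm.eq_one_of_strictMono {π : Equiv.Perm (Fin n)} (h : StrictMono π) : π = 1 :=
  Equiv.ext (congrFun h.eq_id)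

theorem Equiv.Perm.eq_revPerm_of_strictAnti {π : Equiv.Perm (Fin n)} (h : StrictAnti π) :
    π = Fin.revPerm := by
  have : Fin.revPerm * π = 1 :=
    Equiv.Perm.eq_one_of_strictMono fun a b hab => Fin.rev_lt_rev.2 (h hab)
  rw [mul_eq_one_iff_inv_eq] at this
  rw [← this]
  rfl

theorem permContains_nonmonotone {π : Equiv.Perm (Fin n)} (hn : 3 ≤ n) (h₁ : π ≠ 1)
    (h₂ : π ≠ Fin.revPerm) :
    PermContains p132 π ∨ PermContains p213 π ∨ PermContains p231 π ∨ PermContains p312 π := by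
  by_contra! ⟨h132, h213, h231, h312⟩
  rw [permContains_p132] at h132
  rw [permContains_p213] at h213
  rw [permContains_p231] at h231
  rw [permContains_p312] at h312
  push Not at h132 h213 h231 h312
  obtain ⟨m, rfl⟩ : ∃ m, n = m + 3 := ⟨n - 3, by omega⟩
  have hne {i j : Fin (m + 3)} (h : i < j) : π i ≠ π j := π.injective.ne h.ne
  have hzero (j) (hj : 0 < j) : π 0 < π j ↔ π 0 < π 1 := by
    rcases eq_or_ne j 1 with rfl | hj1
    · rfl
    have : 1 < j := by
      simp only [Fin.lt_def, ne_eq, Fin.ext_iff, Fin.val_zero, Fin.val_one] at *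
      omega
    have h01 : (0 : Fin (m + 3)) < 1 := by simp
    have := hne hj
    have := hne h01
    have := hne ‹1 < j›
    have := h132 0 1 j h01 ‹_›
    have := h213 0 1 j h01 ‹_›
    have := h231 0 1 j h01 ‹_›
    have := h312 0 1 j h01 ‹_›
    omega
  have hpair (i j) (hij : i < j) : π i < π j ↔ π 0 < π 1 := by
    rcases eq_or_ne i 0 with rfl | hi
    · exact hzero j hij
    have h0i : 0 < i := Fin.pos_iff_ne_zero.2 hi
    have := hzero i h0i
    have := hzero j (h0i.trans hij)
    have := hne hij
    have := hne h0i
    have := hne (h0i.trans hij)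
    have := h132 0 i j h0i hij
    have := h213 0 i j h0i hij
    have := h231 0 i j h0i hij
    have := h312 0 i j h0i hij
    omega
  by_cases h01 : π 0 < π 1
  · exact h₁ (Equiv.Perm.eq_one_of_strictMono fun i j hij => (hpair i j hij).2 h01)
  · refine h₂ (Equiv.Perm.eq_revPerm_of_strictAnti fun i j hij => ?_)
    exact lt_of_le_of_ne (not_lt.1 (mt (hpair i j hij).1 h01)) (hne hij).symm

theorem exists_ne_of_four_le (hn : 4 ≤ n) (i j k : Fin n) : ∃ l, l ≠ i ∧ l ≠ j ∧ l ≠ k := by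
  obtain ⟨l, -, hl⟩ := Finset.exists_mem_notMem_of_card_lt_card
    (s := {i, j, k}) (t := (Finset.univ : Finset (Fin n)))
    (by rw [Finset.card_univ, Fintype.card_fin]; exact Finset.card_le_three.trans_lt hn)
  exact ⟨l, by simpa using hl⟩

theorem permContains_p3421_of_p231 {π : Equiv.Perm (Fin n)} (hn : 4 ≤ n)
    (h231 : PermContains p231 π)
    (h123 : ¬ PermContains p123 π) (h312 : ¬ PermContains p312 π) (h132 : ¬ PermContains p132 π)
    (h213 : ¬ PermContains p213 π) : PermContains p3421 π := by
  by_contra h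
  rw [permContains_p3421] at h
  rw [permContains_p123] at h123
  rw [permContains_p132] at h132
  rw [permContains_p213] at h213
  rw [permContains_p312] at h312
  push Not at h h123 h132 h213 h312
  have key {a b c d : Fin n} (hab : a < b) (hbc : b < c) (hcd : c < d) :
      ¬ (π c < π a ∧ π a < π b) ∧ ¬ (π d < π a ∧ π a < π b) ∧
        ¬ (π d < π a ∧ π a < π c) ∧ ¬ (π d < π b ∧ π b < π c) := by
    have := h a b c d hab hbc hcd
    have := h123 a b c hab hbc
    have := h132 a b c hab hbc
    have := h213 a b c hab hbc
    have := h312 a b c hab hbc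
    have := h123 a b d hab (hbc.trans hcd)
    have := h132 a b d hab (hbc.trans hcd)
    have := h213 a b d hab (hbc.trans hcd)
    have := h312 a b d hab (hbc.trans hcd)
    have := h123 a c d (hab.trans hbc) hcd
    have := h132 a c d (hab.trans hbc) hcd
    have := h213 a c d (hab.trans hbc) hcd
    have := h312 a c d (hab.trans hbc) hcd
    have := h123 b c d hbc hcd
    have := h132 b c d hbc hcd
    have := h213 b c d hbc hcd
    have := h312 b c d hbc hcd
    have := π.injective.ne hab.ne
    have := π.injective.ne hbc.ne
    have := π.injective.ne hcd.ne
    have := π.injective.ne (hab.trans hbc).ne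
    have := π.injective.ne (hbc.trans hcd).ne
    have := π.injective.ne (hab.trans (hbc.trans hcd)).ne
    omega
  obtain ⟨i, j, k, hij, hjk, h₁, h₂⟩ := permContains_p231.1 h231
  obtain ⟨l, hli, hlj, hlk⟩ := exists_ne_of_four_le hn i j k
  rcases lt_or_gt_of_ne hli with hi | hi
  · exact (key hi hij hjk).2.2.2 ⟨h₁, h₂⟩
  rcases lt_or_gt_of_ne hlj with hj | hj
  · exact (key hi hj hjk).2.2.1 ⟨h₁, h₂⟩
  rcases lt_or_gt_of_ne hlk with hk | hk
  · exact (key hij hj hk).2.1 ⟨h₁, h₂⟩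
  · exact (key hij hjk hk).1 ⟨h₁, h₂⟩

theorem permContains_p1243_of_p132 {π : Equiv.Perm (Fin n)} (hn : 4 ≤ n)
    (h132 : PermContains p132 π)
    (h321 : ¬ PermContains p321 π) (h213 : ¬ PermContains p213 π) (h231 : ¬ PermContains p231 π)
    (h312 : ¬ PermContains p312 π) : PermContains p1243 π := by
  by_contra h
  rw [permContains_p1243] at h
  rw [permContains_p321] at h321
  rw [permContains_p231] at h231
  rw [permContains_p213] at h213
  rw [permContains_p312] at h312
  push Not at h h321 h231 h213 h312
  have key {a b c d : Fin n} (hab : a < b) (hbc : b < c) (hcd : c < d) :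
      ¬ (π a < π c ∧ π c < π b) ∧ ¬ (π a < π d ∧ π d < π b) ∧
        ¬ (π a < π d ∧ π d < π c) ∧ ¬ (π b < π d ∧ π d < π c) := by
    have := h a b c d hab hbc hcd
    have := h321 a b c hab hbc
    have := h231 a b c hab hbc
    have := h213 a b c hab hbc
    have := h312 a b c hab hbc
    have := h321 a b d hab (hbc.trans hcd)
    have := h231 a b d hab (hbc.trans hcd)
    have := h213 a b d hab (hbc.trans hcd)
    have := h312 a b d hab (hbc.trans hcd)
    have := h321 a c d (hab.trans hbc) hcd
    have := h231 a c d (hab.trans hbc) hcd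
    have := h213 a c d (hab.trans hbc) hcd
    have := h312 a c d (hab.trans hbc) hcd
    have := h321 b c d hbc hcd
    have := h231 b c d hbc hcd
    have := h213 b c d hbc hcd
    have := h312 b c d hbc hcd
    have := π.injective.ne hab.ne
    have := π.injective.ne hbc.ne
    have := π.injective.ne hcd.ne
    have := π.injective.ne (hab.trans hbc).ne
    have := π.injective.ne (hbc.trans hcd).ne
    have := π.injective.ne (hab.trans (hbc.trans hcd)).ne
    omega
  obtain ⟨i, j, k, hij, hjk, h₁, h₂⟩ := permContains_p132.1 h132
  obtain ⟨l, hli, hlj, hlk⟩ := exists_ne_of_four_le hn i j k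
  rcases lt_or_gt_of_ne hli with hi | hi
  · exact (key hi hij hjk).2.2.2 ⟨h₁, h₂⟩
  rcases lt_or_gt_of_ne hlj with hj | hj
  · exact (key hi hj hjk).2.2.1 ⟨h₁, h₂⟩
  rcases lt_or_gt_of_ne hlk with hk | hk
  · exact (key hij hj hk).2.1 ⟨h₁, h₂⟩
  · exact (key hij hjk hk).1 ⟨h₁, h₂⟩

theorem permContains_inv_iff {τ : Equiv.Perm (Fin k)} {π : Equiv.Perm (Fin n)} :
    PermContains τ π⁻¹ ↔ PermContains τ⁻¹ π :=
  ⟨fun h => by simpa using h.inv, fun h => by simpa using h.inv⟩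

theorem permContains_rev_conj_iff {τ : Equiv.Perm (Fin k)} {π : Equiv.Perm (Fin n)} :
    PermContains τ (Fin.revPerm * π * Fin.revPerm) ↔
      PermContains (Fin.revPerm * τ * Fin.revPerm) π := by
  have hconj {m : ℕ} (σ : Equiv.Perm (Fin m)) :
      Fin.revPerm * (Fin.revPerm * σ * Fin.revPerm) * Fin.revPerm = σ := by ext; simp
  exact ⟨fun h => by simpa only [hconj] using h.rev_conj,
    fun h => by simpa only [hconj] using h.rev_conj⟩

theorem permContains_p4312_of_p312 {π : Equiv.Perm (Fin n)} (hn : 4 ≤ n)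
    (h312 : PermContains p312 π)
    (h123 : ¬ PermContains p123 π) (h231 : ¬ PermContains p231 π) (h132 : ¬ PermContains p132 π)
    (h213 : ¬ PermContains p213 π) : PermContains p4312 π :=
  permContains_inv_iff.1 (permContains_p3421_of_p231 hn (permContains_inv_iff.2 h312)
    (mt permContains_inv_iff.1 h123) (mt permContains_inv_iff.1 h231)
    (mt permContains_inv_iff.1 h132) (mt permContains_inv_iff.1 h213))

theorem permContains_p2134_of_p213 {π : Equiv.Perm (Fin n)} (hn : 4 ≤ n)
    (h213 : PermContains p213 π)
    (h321 : ¬ PermContains p321 π) (h132 : ¬ PermContains p132 π) (h231 : ¬ PermContains p231 π)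
    (h312 : ¬ PermContains p312 π) : PermContains p2134 π := by
  rw [← rev_conj_p1243, ← permContains_rev_conj_iff]
  apply permContains_p1243_of_p132 hn <;>
    simpa only [permContains_rev_conj_iff, rev_conj_p321, rev_conj_p132, rev_conj_p213,
      rev_conj_p231, rev_conj_p312]

end Structure

theorem Set.exists_subset_triple_of_ncard_le_three {α : Type*} {T : Set α} (hfin : T.Finite)
    (hcard : T.ncard ≤ 3) {t : α} (ht : t ∈ T) : ∃ x ∈ T, ∃ y ∈ T, T ⊆ {t, x, y} := by
  have hle : (T \ {t}).ncard ≤ 2 := by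
    rw [Set.ncard_sdiff_singleton_of_mem ht]
    omega
  have hsub {s : Set α} (h : T \ {t} = s) : T ⊆ insert t s := by
    rw [← h, Set.insert_sdiff_singleton]
    exact Set.subset_insert _ _
  have hmem {x : α} (h : x ∈ T \ {t}) : x ∈ T := h.1
  interval_cases hn : (T \ {t}).ncard
  · have := hsub ((Set.ncard_eq_zero (hfin.subset Set.sdiff_subset)).1 hn)
    exact ⟨t, ht, t, ht, by simpa using this⟩
  · obtain ⟨x, hx⟩ := Set.ncard_eq_one.1 hn
    have hxT : x ∈ T := hmem (hx ▸ rfl)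
    exact ⟨x, hxT, x, hxT, by simpa using hsub hx⟩
  · obtain ⟨x, y, -, hxy⟩ := Set.ncard_eq_two.1 hn
    exact ⟨x, hmem (hxy ▸ by simp), y, hmem (hxy ▸ by simp), hsub hxy⟩

theorem AvoidersGenerate.of_subset_triple {T : Set (Σ k : ℕ, Equiv.Perm (Fin k))}
    {p q r t x y : Σ k : ℕ, Equiv.Perm (Fin k)} (hS : AvoidersGenerate {p, q, r})
    (hT : T ⊆ {t, x, y})
    (ht : PermContains p.2 t.2 ∨ PermContains q.2 t.2 ∨ PermContains r.2 t.2)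
    (hx : PermContains p.2 x.2 ∨ PermContains q.2 x.2 ∨ PermContains r.2 x.2)
    (hy : PermContains p.2 y.2 ∨ PermContains q.2 y.2 ∨ PermContains r.2 y.2) :
    AvoidersGenerate T := by
  refine hS.mono fun z hz => ?_
  rcases hT hz with rfl | rfl | rfl <;> simpa

theorem eq_of_permContains {x y : Σ k : ℕ, Equiv.Perm (Fin k)} (hlen : x.1 = y.1)
    (h : PermContains x.2 y.2) : x = y := by
  obtain ⟨k, σ⟩ := x
  obtain ⟨l, τ⟩ := y
  obtain rfl : k = l := hlen
  obtain rfl : σ = τ := h.eq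
  rfl

/-- Here `m` is the monotone pattern of length 3 contained in a member of `T`, and `m₄`, `p₄`, `q₄`
are the patterns of length 4 that replace `m`, `p`, `q` in the exceptional set `{m, p, q}`. -/
theorem avoidersGenerate_or_eq_triple {T : Set (Σ k : ℕ, Equiv.Perm (Fin k))}
    {m p q r s m₄ p₄ q₄ t : Σ k : ℕ, Equiv.Perm (Fin k)} (hfin : T.Finite) (hcard : T.ncard ≤ 3)
    (hlen : ∀ x ∈ T, 3 ≤ x.1) (hm : m.1 = 3) (hp : p.1 = 3) (hq : q.1 = 3) (ht : t ∈ T)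
    (htm : PermContains m.2 t.2) (htm₄ : 4 ≤ t.1 → PermContains m₄.2 t.2)
    (hT : ∀ x ∈ T, PermContains m.2 x.2 ∨ PermContains p.2 x.2 ∨ PermContains q.2 x.2 ∨
      PermContains r.2 x.2 ∨ PermContains s.2 x.2)
    (hp₄ : ∀ x : Σ k : ℕ, Equiv.Perm (Fin k), 4 ≤ x.1 → PermContains p.2 x.2 →
      ¬ PermContains m.2 x.2 → ¬ PermContains q.2 x.2 → ¬ PermContains r.2 x.2 →
      ¬ PermContains s.2 x.2 → PermContains p₄.2 x.2)
    (hq₄ : ∀ x : Σ k : ℕ, Equiv.Perm (Fin k), 4 ≤ x.1 → PermContains q.2 x.2 →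
      ¬ PermContains m.2 x.2 → ¬ PermContains p.2 x.2 → ¬ PermContains r.2 x.2 →
      ¬ PermContains s.2 x.2 → PermContains q₄.2 x.2)
    (hrs : AvoidersGenerate {m, r, s}) (hpr : AvoidersGenerate {m, r, p})
    (hps : AvoidersGenerate {m, s, p}) (hqr : AvoidersGenerate {m, r, q})
    (hqs : AvoidersGenerate {m, s, q}) (hmpq : AvoidersGenerate {m₄, p, q})
    (hpq : AvoidersGenerate {m, p₄, q}) (hqp : AvoidersGenerate {m, p, q₄}) :
    AvoidersGenerate T ∨ T = {m, p, q} := by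
  obtain ⟨x, hx, y, hy, hsub⟩ := Set.exists_subset_triple_of_ncard_le_three hfin hcard ht
  refine or_iff_not_imp_left.2 fun hnot => ?_
  have hTx := hT x hx
  have hTy := hT y hy
  obtain ⟨u, v, hu, hv, huv, ⟨hup, hum, huq, hur, hus⟩, hvq, hvm, hvp, hvr, hvs⟩ :
      ∃ u v, u ∈ T ∧ v ∈ T ∧ T ⊆ {t, u, v} ∧
        (PermContains p.2 u.2 ∧ ¬ PermContains m.2 u.2 ∧ ¬ PermContains q.2 u.2 ∧
          ¬ PermContains r.2 u.2 ∧ ¬ PermContains s.2 u.2) ∧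
        (PermContains q.2 v.2 ∧ ¬ PermContains m.2 v.2 ∧ ¬ PermContains p.2 v.2 ∧
          ¬ PermContains r.2 v.2 ∧ ¬ PermContains s.2 v.2) := by
    by_contra hex
    have hxy := mt (fun h => ⟨x, y, hx, hy, hsub, h⟩) hex
    have hyx := mt (fun h => ⟨y, x, hy, hx, by rwa [Set.pair_comm], h⟩) hex
    have h₁ := mt (fun h : _ ∧ _ => hrs.of_subset_triple hsub (.inl htm) h.1 h.2) hnot
    have h₂ := mt (fun h : _ ∧ _ => hpr.of_subset_triple hsub (.inl htm) h.1 h.2) hnot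
    have h₃ := mt (fun h : _ ∧ _ => hps.of_subset_triple hsub (.inl htm) h.1 h.2) hnot
    have h₄ := mt (fun h : _ ∧ _ => hqr.of_subset_triple hsub (.inl htm) h.1 h.2) hnot
    have h₅ := mt (fun h : _ ∧ _ => hqs.of_subset_triple hsub (.inl htm) h.1 h.2) hnot
    clear * - hxy hyx h₁ h₂ h₃ h₄ h₅ hTx hTy
    grind
  have hlen3 {z} (hz : z ∈ T) (h : ¬ 4 ≤ z.1) : 3 = z.1 := by
    have := hlen z hz
    omega
  have ht3 := hlen3 ht fun h =>
    hnot (hmpq.of_subset_triple huv (.inl (htm₄ h)) (.inr (.inl hup)) (.inr (.inr hvq)))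
  have hu3 := hlen3 hu fun h => hnot (hpq.of_subset_triple huv (.inl htm)
    (.inr (.inl (hp₄ u h hup hum huq hur hus))) (.inr (.inr hvq)))
  have hv3 := hlen3 hv fun h => hnot (hqp.of_subset_triple huv (.inl htm)
    (.inr (.inl hup)) (.inr (.inr (hq₄ v h hvq hvm hvp hvr hvs))))
  rw [eq_of_permContains (hm.trans ht3) htm, eq_of_permContains (hp.trans hu3) hup,
    eq_of_permContains (hq.trans hv3) hvq]
  refine huv.antisymm ?_
  rintro z (rfl | rfl | rfl) <;> assumption

theorem closure_avoid_at_most_three_patterns (T : Set (Σ k : ℕ, Equiv.Perm (Fin k)))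
    (hfin : T.Finite) (hcard : T.ncard ≤ 3)
    (hlen : ∀ x ∈ T, 3 ≤ x.1)
    (hpair : ∀ r s : ℕ, 1 ≤ r → 1 ≤ s →
      ¬ ((⟨r, (1 : Equiv.Perm (Fin r))⟩ : Σ k : ℕ, Equiv.Perm (Fin k)) ∈ T ∧
         (⟨s, (Fin.revPerm : Equiv.Perm (Fin s))⟩ : Σ k : ℕ, Equiv.Perm (Fin k)) ∈ T))
    (h2 : T ≠ ({⟨3, p132⟩, ⟨3, p213⟩, ⟨3, p321⟩} : Set (Σ k : ℕ, Equiv.Perm (Fin k))))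
    (h3 : T ≠ ({⟨3, p123⟩, ⟨3, p231⟩, ⟨3, p312⟩} : Set (Σ k : ℕ, Equiv.Perm (Fin k))))
    (n : ℕ) :
    Subgroup.closure (avoidSet n T) = ⊤ := by
  suffices AvoidersGenerate T from this n
  have h321 : p321 = Fin.revPerm := by decide
  by_cases hid : ∃ r, (⟨r, 1⟩ : Σ k : ℕ, Equiv.Perm (Fin k)) ∈ T
  · obtain ⟨r, hr⟩ := hid
    have hr3 : 3 ≤ r := hlen _ hr
    refine (avoidersGenerate_or_eq_triple (m := ⟨3, p123⟩) (p := ⟨3, p231⟩) (q := ⟨3, p312⟩)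
      (r := ⟨3, p132⟩) (s := ⟨3, p213⟩) (m₄ := ⟨4, p1234⟩) (p₄ := ⟨4, p3421⟩) (q₄ := ⟨4, p4312⟩)
      hfin hcard hlen rfl rfl rfl hr (PermContains.one_of_le hr3)
      (fun h => PermContains.one_of_le h) (fun x hx => ?_)
      (fun _ => permContains_p3421_of_p231) (fun _ => permContains_p4312_of_p312)
      avoidersGenerate_123_132_213 avoidersGenerate_123_132_231 avoidersGenerate_123_213_231
      avoidersGenerate_123_132_312 avoidersGenerate_123_213_312 avoidersGenerate_1234_231_312
      avoidersGenerate_123_3421_312 avoidersGenerate_123_231_4312).resolve_right h3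
    obtain ⟨k, π⟩ := x
    have hk : 3 ≤ k := hlen _ hx
    by_cases h1 : π = 1
    · subst h1
      exact .inl (PermContains.one_of_le hk)
    · have := permContains_nonmonotone hk h1 (by
        rintro rfl
        exact hpair r k (by omega) (by omega) ⟨hr, hx⟩)
      tauto
  by_cases hrev : ∃ s, (⟨s, Fin.revPerm⟩ : Σ k : ℕ, Equiv.Perm (Fin k)) ∈ T
  · obtain ⟨s, hs⟩ := hrev
    have hs3 : 3 ≤ s := hlen _ hs
    refine (avoidersGenerate_or_eq_triple (m := ⟨3, p321⟩) (p := ⟨3, p132⟩) (q := ⟨3, p213⟩)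
      (r := ⟨3, p231⟩) (s := ⟨3, p312⟩) (m₄ := ⟨4, p4321⟩) (p₄ := ⟨4, p1243⟩) (q₄ := ⟨4, p2134⟩)
      hfin hcard hlen rfl rfl rfl hs (h321 ▸ PermContains.rev_of_le hs3)
      (fun h => PermContains.rev_of_le h) (fun x hx => ?_)
      (fun _ => permContains_p1243_of_p132) (fun _ => permContains_p2134_of_p213)
      avoidersGenerate_321_231_312 avoidersGenerate_321_231_132 avoidersGenerate_321_312_132
      avoidersGenerate_321_231_213 avoidersGenerate_321_312_213 avoidersGenerate_4321_132_213
      avoidersGenerate_321_1243_213 avoidersGenerate_321_132_2134).resolve_right fun h => h2 ?_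
    · obtain ⟨k, π⟩ := x
      have hk : 3 ≤ k := hlen _ hx
      by_cases h1 : π = Fin.revPerm
      · subst h1
        exact .inl (h321 ▸ PermContains.rev_of_le hk)
      · have := permContains_nonmonotone hk (fun h => hid ⟨k, h ▸ hx⟩) h1
        tauto
    · rw [h]
      ext
      simp only [Set.mem_insert_iff, Set.mem_singleton_iff]
      tauto
  rcases T.eq_empty_or_nonempty with rfl | ⟨t, ht⟩
  · exact avoidersGenerate_132_213_231.mono (by simp)
  obtain ⟨x, hx, y, hy, hsub⟩ := Set.exists_subset_triple_of_ncard_le_three hfin hcard ht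
  have hT (z) (hz : z ∈ T) := permContains_nonmonotone (hlen z hz)
    (fun h => hid ⟨z.1, h ▸ hz⟩) (fun h => hrev ⟨z.1, h ▸ hz⟩)
  have htT := hT t ht
  have hxT := hT x hx
  have hyT := hT y hy
  have h₁ := avoidersGenerate_132_213_231.of_subset_triple hsub
  have h₂ := avoidersGenerate_132_213_312.of_subset_triple hsub
  have h₃ := avoidersGenerate_132_231_312.of_subset_triple hsub
  have h₄ := avoidersGenerate_213_231_312.of_subset_triple hsub
  clear * - htT hxT hyT h₁ h₂ h₃ h₄
  grind
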